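/- Every width-w DNF f on n variables can be ε-approximated under the uniform distribution by a width-w DNF g of size at most (2 + (1/w)·log_2(1/ε))^{Cw} for an absolute constant C, where g is obtained from f by deleting terms (so g(x) ≤ f(x) pointwise) and Pr_x[f(x) ≠ g(x)] ≤ ε. -/

import Mathlib

open Finset
open scoped Classical BigOperators

noncomputable section

/-- A term over `n` Boolean variables, given as a partial assignment:
`C i = some b` means the literal `x i = b` appears in the term. -/
abbrev Term (n : ℕ) := Fin n → Option Bool

/-- Satisfaction of a term by an assignment. -/
def TermSat {n : ℕ} (C : Term n) (x : Fin n → Bool) : Prop :=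
  ∀ i b, C i = some b → x i = b

/-- Width of a term: the number of variables it mentions. -/
def termWidth {n : ℕ} (C : Term n) : ℕ :=
  (Finset.univ.filter fun i => C i ≠ none).card

/-- The index function of a decision list with terms `C`:
the first index whose term is satisfied by `x` (and `m` conventionally if none,
since `sInf ∅ = 0`; the default rule hypothesis makes the set nonempty). -/
def DLind {n m : ℕ} (C : Fin m → Term n) (x : Fin n → Bool) : ℕ :=
  sInf {i : ℕ | ∃ h : i < m, TermSat (C ⟨i, h⟩) x}

/-- Evaluation of a decision list with terms `C` and values `v`. -/
def DLeval {n m : ℕ} {V : Type} [Inhabited V] (C : Fin m → Term n)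
    (v : Fin m → V) (x : Fin n → Bool) : V :=
  if h : DLind C x < m then v ⟨DLind C x, h⟩ else default

/-- Probability of an event under the uniform distribution on `{0,1}^n`. -/
def pr (n : ℕ) (P : (Fin n → Bool) → Prop) : ℝ :=
  ((Finset.univ.filter P).card : ℝ) / 2 ^ n

/-- Hit probability of index `i` in the decision list with terms `C`. -/
def pL {n m : ℕ} (C : Fin m → Term n) (i : ℕ) : ℝ :=
  pr n fun x => DLind C x = i

/-- The index function of the sub-decision-list `L|_J`. -/
def DLindSub {n m : ℕ} (C : Fin m → Term n) (J : Finset (Fin m)) (x : Fin n → Bool) : ℕ :=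
  sInf {i : ℕ | ∃ h : i < m, (⟨i, h⟩ : Fin m) ∈ J ∧ TermSat (C ⟨i, h⟩) x}

/-- Evaluation of the sub-decision-list `L|_J`. -/
def DLevalSub {n m : ℕ} {V : Type} [Inhabited V] (C : Fin m → Term n) (v : Fin m → V)
    (J : Finset (Fin m)) (x : Fin n → Bool) : V :=
  if h : DLindSub C J x < m then v ⟨DLindSub C J x, h⟩ else default

/-- A restriction: `some b` fixes a coordinate to `b`, `none` is a star. -/
abbrev Restriction (n : ℕ) := Fin n → Option Bool

/-- `x` is a completion of the restriction `ρ`. -/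
def Compatible {n : ℕ} (ρ : Restriction n) (x : Fin n → Bool) : Prop :=
  ∀ i b, ρ i = some b → x i = b

/-- Number of stars of a restriction. -/
def stars {n : ℕ} (ρ : Restriction n) : ℕ :=
  (Finset.univ.filter fun i => ρ i = none).card

/-- Weight of a restriction under the product distribution `U(n, α)`:
each coordinate independently `*` with probability `α`, and `0` or `1`
each with probability `(1-α)/2`. -/
def restW {n : ℕ} (α : ℝ) (ρ : Restriction n) : ℝ :=
  ∏ i : Fin n, if ρ i = none then α else (1 - α) / 2

/-- Index `i` is useful in the restricted decision list `L↾ρ`: some completion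
of `ρ` hits rule `i`. -/
def Useful {n m : ℕ} (C : Fin m → Term n) (ρ : Restriction n) (i : Fin m) : Prop :=
  ∃ x, Compatible ρ x ∧ DLind C x = i.val

/-- Number of useful indices of `L↾ρ`. -/
def useNum {n m : ℕ} (C : Fin m → Term n) (ρ : Restriction n) : ℕ :=
  (Finset.univ.filter fun i : Fin m => Useful C ρ i).card

/-- `q_L(α, i)`: probability over `ρ ~ U(n, α)` that index `i` is useful in `L↾ρ`. -/
def qL {n m : ℕ} (C : Fin m → Term n) (α : ℝ) (i : Fin m) : ℝ :=
  ∑ ρ : Restriction n, restW α ρ * (if Useful C ρ i then 1 else 0)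

/-- Transition weight of the `β`-noise on a single bit. -/
def noiseW (β : ℝ) (a b : Bool) : ℝ := if a = b then (1 + β) / 2 else (1 - β) / 2

/-- Joint density of `(x, y)` where `x` is uniform and `y ~ N_β(x)`. -/
def pairW {n : ℕ} (β : ℝ) (x y : Fin n → Bool) : ℝ :=
  (1 / 2) ^ n * ∏ i : Fin n, noiseW β (x i) (y i)

/-- `Stab_L(β, i) = Pr[Ind L(x) = Ind L(y) = i]` for `x` uniform, `y ~ N_β(x)`. -/
def StabInd {n m : ℕ} (C : Fin m → Term n) (β : ℝ) (i : Fin m) : ℝ :=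
  ∑ x : Fin n → Bool, ∑ y : Fin n → Bool,
    pairW β x y * (if DLind C x = i.val ∧ DLind C y = i.val then 1 else 0)

/-- `Stab_β(g) = Pr[g(x) = g(y) = 1]` for `x` uniform, `y ~ N_β(x)`. -/
def stab {n : ℕ} (β : ℝ) (g : (Fin n → Bool) → Bool) : ℝ :=
  ∑ x : Fin n → Bool, ∑ y : Fin n → Bool,
    pairW β x y * (if g x = true ∧ g y = true then 1 else 0)

/-- Probability weight that a uniform completion of `ρ` equals `x`. -/
def compW {n : ℕ} (ρ : Restriction n) (x : Fin n → Bool) : ℝ :=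
  if Compatible ρ x then (1 / 2) ^ stars ρ else 0

/-- Evaluation of a DNF with terms `T`. -/
def DNFeval {n M : ℕ} (T : Fin M → Term n) (x : Fin n → Bool) : Prop :=
  ∃ t, TermSat (T t) x


/-- Probability that a random restriction leaves the set `A` reachable. -/
def reachQ (n : ℕ) (α : ℝ) (A : (Fin n → Bool) → Prop) : ℝ :=
  ∑ ρ : Restriction n, restW α ρ * (if ∃ x, Compatible ρ x ∧ A x then 1 else 0)

lemma restW_nonneg {n : ℕ} {α : ℝ} (h0 : 0 ≤ α) (h1 : α ≤ 1) (ρ : Restriction n) :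
    0 ≤ restW α ρ := by
  unfold restW
  apply Finset.prod_nonneg
  intro i _
  split_ifs
  · exact h0
  · linarith

lemma restW_cons {n : ℕ} (α : ℝ) (a : Option Bool) (ρ : Restriction n) :
    restW α (Fin.cons a ρ : Restriction (n+1)) =
      (if a = none then α else (1 - α) / 2) * restW α ρ := by
  unfold restW
  rw [Fin.prod_univ_succ]
  simp

lemma reachQ_mono {n : ℕ} {α : ℝ} (h0 : 0 ≤ α) (h1 : α ≤ 1) {A B : (Fin n → Bool) → Prop}
    (h : ∀ x, A x → B x) : reachQ n α A ≤ reachQ n α B := by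
  unfold reachQ
  apply Finset.sum_le_sum
  intro ρ _
  apply mul_le_mul_of_nonneg_left _ (restW_nonneg h0 h1 ρ)
  by_cases hA : ∃ x, Compatible ρ x ∧ A x
  · have hB : ∃ x, Compatible ρ x ∧ B x := by
      obtain ⟨x, h1, h2⟩ := hA
      exact ⟨x, h1, h x h2⟩
    rw [if_pos hA, if_pos hB]
  · rw [if_neg hA]
    split_ifs <;> norm_num

lemma compat_cons_none {n : ℕ} (ρ : Restriction n) (A : (Fin (n+1) → Bool) → Prop) :
    (∃ x, Compatible (Fin.cons none ρ : Restriction (n+1)) x ∧ A x) ↔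
    (∃ x, Compatible ρ x ∧ (A (Fin.cons false x) ∨ A (Fin.cons true x))) := by
  constructor
  · rintro ⟨x, hx, hA⟩
    refine ⟨Fin.tail x, fun i b h => hx i.succ b (by simpa using h), ?_⟩
    rw [← Fin.cons_self_tail x] at hA
    cases h : x 0 <;> rw [h] at hA
    · exact Or.inl hA
    · exact Or.inr hA
  · rintro ⟨x, hx, hA | hA⟩
    · refine ⟨_, fun i => ?_, hA⟩
      refine Fin.cases ?_ (fun j => ?_) i
      · simp
      · intro b h; simpa using hx j b (by simpa using h)
    · refine ⟨_, fun i => ?_, hA⟩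
      refine Fin.cases ?_ (fun j => ?_) i
      · simp
      · intro b h; simpa using hx j b (by simpa using h)

lemma compat_cons_some {n : ℕ} (a : Bool) (ρ : Restriction n) (A : (Fin (n+1) → Bool) → Prop) :
    (∃ x, Compatible (Fin.cons (some a) ρ : Restriction (n+1)) x ∧ A x) ↔
    (∃ x, Compatible ρ x ∧ A (Fin.cons a x)) := by
  constructor
  · rintro ⟨x, hx, hA⟩
    refine ⟨Fin.tail x, fun i b h => hx i.succ b (by simpa using h), ?_⟩
    rw [← Fin.cons_self_tail x] at hA
    have := hx 0 a (by simp)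
    rwa [this] at hA
  · rintro ⟨x, hx, hA⟩
    refine ⟨_, fun i => ?_, hA⟩
    refine Fin.cases ?_ (fun j => ?_) i
    · simp
    · intro b h; simpa using hx j b (by simpa using h)

lemma sum_cons_fun {n : ℕ} {β : Type} [Fintype β] (f : (Fin (n+1) → β) → ℝ) :
    ∑ ρ, f ρ = ∑ a : β, ∑ ρ : Fin n → β, f (Fin.cons a ρ) := by
  rw [← (Fin.consEquiv (fun _ : Fin (n+1) => β)).sum_comp, Fintype.sum_prod_type]
  rfl

lemma reachQ_succ {n : ℕ} (α : ℝ) (A : (Fin (n+1) → Bool) → Prop) :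
    reachQ (n+1) α A =
      α * reachQ n α (fun x => A (Fin.cons false x) ∨ A (Fin.cons true x))
      + (1 - α) / 2 * reachQ n α (fun x => A (Fin.cons false x))
      + (1 - α) / 2 * reachQ n α (fun x => A (Fin.cons true x)) := by
  unfold reachQ
  rw [sum_cons_fun, Fintype.sum_option, Fintype.sum_bool]
  simp only [restW_cons, compat_cons_none, compat_cons_some,
    Finset.mul_sum]
  simp only [if_true, reduceCtorEq, if_false, mul_assoc]
  ring

lemma pr_eq_sum (n : ℕ) (P : (Fin n → Bool) → Prop) :
    pr n P = (∑ x, if P x then (1:ℝ) else 0) / 2 ^ n := by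
  unfold pr
  rw [Finset.sum_boole]

lemma pr_succ {n : ℕ} (A : (Fin (n+1) → Bool) → Prop) :
    pr (n+1) A = (pr n (fun x => A (Fin.cons false x)) + pr n (fun x => A (Fin.cons true x))) / 2 := by
  simp only [pr_eq_sum]
  rw [sum_cons_fun, Fintype.sum_bool]
  rw [pow_succ]
  field_simp
  ring

lemma pr_nonneg (n : ℕ) (P : (Fin n → Bool) → Prop) : 0 ≤ pr n P := by
  unfold pr; positivity

lemma two_point {δ a b : ℝ} (hd : 0 < δ) (hd1 : δ ≤ 1) (ha : 0 ≤ a) (hab : a ≤ b) :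
    ((a + b) / 2) ^ δ ≤ (1 - δ) * b ^ δ + δ / 2 * a ^ δ + δ / 2 * b ^ δ := by
  rcases eq_or_lt_of_le (ha.trans hab) with hb | hb
  · have : a = 0 := by linarith
    subst this; subst hb
    simp [Real.zero_rpow hd.ne']
  · obtain ⟨c, rfl⟩ : ∃ c, a = c * b := ⟨a / b, by field_simp⟩
    have hc : 0 ≤ c := nonneg_of_mul_nonneg_left ha hb
    have hc1 : c ≤ 1 := by
      by_contra h
      push Not at h
      nlinarith
    have e : (c * b + b) / 2 = (1 + (c - 1) / 2) * b := by ring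
    rw [e, Real.mul_rpow (by linarith) hb.le, Real.mul_rpow hc hb.le]
    have h1 : (1 + (c - 1) / 2) ^ δ ≤ 1 + δ * ((c - 1) / 2) :=
      rpow_one_add_le_one_add_mul_self (by linarith) hd.le hd1
    have h2 : c ≤ c ^ δ := by
      rcases eq_or_lt_of_le hc with h | h
      · rw [← h, Real.zero_rpow hd.ne']
      · exact Real.self_le_rpow_of_le_one hc hc1 hd1
    have hbp : 0 < b ^ δ := Real.rpow_pos_of_pos hb δ
    have h3 : (1 + (c - 1) / 2) ^ δ ≤ (1 - δ) + δ / 2 * c ^ δ + δ / 2 := by nlinarith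
    calc _ ≤ ((1 - δ) + δ / 2 * c ^ δ + δ / 2) * b ^ δ :=
          mul_le_mul_of_nonneg_right h3 hbp.le
      _ = _ := by ring

lemma pr_rpow_le_reachQ {δ : ℝ} (hd : 0 < δ) (hd1 : δ ≤ 1) :
    ∀ (n : ℕ) (A : (Fin n → Bool) → Prop), (pr n A) ^ δ ≤ reachQ n (1 - δ) A := by
  intro n
  induction n with
  | zero =>
    intro A
    rw [pr_eq_sum]
    unfold reachQ restW
    by_cases h : A default
    · have h2 : ∃ x, Compatible (default : Restriction 0) x ∧ A x :=
        ⟨default, fun i => i.elim0, h⟩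
      simp only [Fintype.sum_unique]
      rw [if_pos (by convert h), if_pos (by convert h2)]
      simp
    · have h2 : ¬ ∃ x, Compatible (default : Restriction 0) x ∧ A x := by
        rintro ⟨x, _, hx⟩
        rw [Subsingleton.elim x default] at hx
        exact h hx
      simp only [Fintype.sum_unique]
      rw [if_neg (by convert h), if_neg (by convert h2)]
      simp [Real.zero_rpow hd.ne']
  | succ n ih =>
    intro A
    rw [pr_succ, reachQ_succ]
    have i0 := ih (fun x => A (Fin.cons false x))
    have i1 := ih (fun x => A (Fin.cons true x))
    have n0 := pr_nonneg n (fun x => A (Fin.cons false x))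
    have n1 := pr_nonneg n (fun x => A (Fin.cons true x))
    have m0 : reachQ n (1 - δ) (fun x => A (Fin.cons false x)) ≤
        reachQ n (1 - δ) (fun x => A (Fin.cons false x) ∨ A (Fin.cons true x)) :=
      reachQ_mono (by linarith) (by linarith) (fun x h => Or.inl h)
    have m1 : reachQ n (1 - δ) (fun x => A (Fin.cons true x)) ≤
        reachQ n (1 - δ) (fun x => A (Fin.cons false x) ∨ A (Fin.cons true x)) :=
      reachQ_mono (by linarith) (by linarith) (fun x h => Or.inr h)
    generalize reachQ n (1 - δ) (fun x => A (Fin.cons false x) ∨ A (Fin.cons true x)) = Q at *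
    generalize reachQ n (1 - δ) (fun x => A (Fin.cons false x)) = Q0 at *
    generalize reachQ n (1 - δ) (fun x => A (Fin.cons true x)) = Q1 at *
    generalize pr n (fun x => A (Fin.cons false x)) = a at *
    generalize pr n (fun x => A (Fin.cons true x)) = b at *
    rcases le_total a b with h | h
    · have := two_point hd hd1 n0 h
      nlinarith
    · have := two_point hd hd1 n1 h
      rw [add_comm a b]
      nlinarith

/-- The term is already forced true by the restriction. -/
def Forced {n : ℕ} (C : Term n) (ρ : Restriction n) : Prop :=
  ∀ i b, C i = some b → ρ i = some b

/-- `i` is the first satisfied term. -/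
def FirstHit {n M : ℕ} (T : Fin M → Term n) (i : Fin M) (x : Fin n → Bool) : Prop :=
  TermSat (T i) x ∧ ∀ j < i, ¬ TermSat (T j) x

/-- `i` is the first forced term. -/
def FirstForced {n M : ℕ} (T : Fin M → Term n) (i : Fin M) (ρ : Restriction n) : Prop :=
  Forced (T i) ρ ∧ ∀ j < i, ¬ Forced (T j) ρ

/-- Override a restriction by a term. -/
def override {n : ℕ} (C : Term n) (ρ : Restriction n) : Restriction n :=
  fun i => if C i = none then ρ i else C i

lemma sum_coord (α : ℝ) : ∑ a : Option Bool, (if a = none then α else (1 - α) / 2) = 1 := by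
  rw [Fintype.sum_option, Fintype.sum_bool]
  simp

lemma sum_restW (n : ℕ) (α : ℝ) : ∑ ρ : Restriction n, restW α ρ = 1 := by
  unfold restW
  have := Finset.prod_univ_sum (fun _ : Fin n => (Finset.univ : Finset (Option Bool)))
    (fun _ a => if a = none then α else (1 - α) / 2)
  rw [Fintype.piFinset_univ] at this
  rw [← this]
  simp only [sum_coord, Finset.prod_const_one]

lemma override_firstForced {n M : ℕ} (T : Fin M → Term n) (i : Fin M) (ρ : Restriction n)
    (h : ∃ x, Compatible ρ x ∧ FirstHit T i x) : FirstForced T i (override (T i) ρ) := by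
  obtain ⟨x, hx, hs, hn⟩ := h
  constructor
  · intro k b hb
    simp [override, hb]
  · intro j hj hf
    apply hn j hj
    intro k b hb
    have := hf k b hb
    unfold override at this
    split_ifs at this with h
    · exact hx k b this
    · exact hs k b this

/-- Total weight of the restrictions overriding to a given one. -/
lemma fiber_sum {n : ℕ} {δ : ℝ} (hd : 0 < δ) (C : Term n) (σ : Restriction n)
    (hσ : Forced C σ) :
    ∑ ρ ∈ Finset.univ.filter (fun ρ : Restriction n => override C ρ = σ), restW (1 - δ) ρ
      = restW (1 - δ) σ * (2 / δ) ^ termWidth C := by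
  have e : Finset.univ.filter (fun ρ : Restriction n => override C ρ = σ) =
      Fintype.piFinset (fun i => if C i = none then {σ i} else Finset.univ) := by
    ext ρ
    simp only [Finset.mem_filter, Finset.mem_univ, true_and, Fintype.mem_piFinset]
    constructor
    · intro h i
      have := congrFun h i
      unfold override at this
      split_ifs with hc
      · rw [if_pos hc] at this; simpa using this
      · simp
    · intro h
      funext i
      have := h i
      unfold override
      split_ifs with hc
      · rw [if_pos hc] at this; simpa using this
      · cases hb : C i with
        | none => exact absurd hb hc
        | some b => exact (hσ i b hb).symm
  rw [e]
  unfold restW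
  rw [← Finset.prod_univ_sum (fun i => if C i = none then {σ i} else Finset.univ)
    (fun _ a => if a = none then (1 - δ) else (1 - (1 - δ)) / 2)]
  have e2 : (2 / δ) ^ termWidth C = ∏ i, (if C i ≠ none then 2 / δ else 1) := by
    unfold termWidth
    rw [← Finset.prod_filter, Finset.prod_const]
  rw [e2, ← Finset.prod_mul_distrib]
  apply Finset.prod_congr rfl
  intro i _
  by_cases hc : C i = none
  · simp [hc]
  · rw [if_neg hc, sum_coord, if_pos hc]
    cases hb : C i with
    | none => exact absurd hb hc
    | some b =>
      rw [hσ i b hb]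
      simp
      field_simp

lemma reachQ_le_forced {n M w : ℕ} {δ : ℝ} (hd : 0 < δ) (hd1 : δ ≤ 1) (T : Fin M → Term n)
    (hw : ∀ t, termWidth (T t) ≤ w) (i : Fin M) :
    reachQ n (1 - δ) (FirstHit T i) ≤
      (2 / δ) ^ w * ∑ σ ∈ Finset.univ.filter (FirstForced T i), restW (1 - δ) σ := by
  have hnn : ∀ ρ : Restriction n, 0 ≤ restW (1 - δ) ρ :=
    fun ρ => restW_nonneg (by linarith) (by linarith) ρ
  calc reachQ n (1 - δ) (FirstHit T i)
      = ∑ ρ ∈ Finset.univ.filter (fun ρ : Restriction n => ∃ x, Compatible ρ x ∧ FirstHit T i x),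
          restW (1 - δ) ρ := by
        unfold reachQ
        rw [Finset.sum_filter]
        simp
    _ ≤ ∑ ρ ∈ Finset.univ.filter (fun ρ : Restriction n => FirstForced T i (override (T i) ρ)),
          restW (1 - δ) ρ := by
        apply Finset.sum_le_sum_of_subset_of_nonneg
        · intro ρ
          simp only [Finset.mem_filter, Finset.mem_univ, true_and]
          exact override_firstForced T i ρ
        · intro ρ _ _; exact hnn ρ
    _ = ∑ σ ∈ Finset.univ.filter (FirstForced T i),
          ∑ ρ ∈ Finset.univ.filter (fun ρ : Restriction n => override (T i) ρ = σ),
            restW (1 - δ) ρ := by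
        rw [← Finset.sum_fiberwise_of_maps_to (t := Finset.univ.filter (FirstForced T i))
          (g := override (T i))]
        · apply Finset.sum_congr rfl
          intro σ hσ
          apply Finset.sum_congr _ (fun _ _ => rfl)
          ext ρ
          simp only [Finset.mem_filter, Finset.mem_univ, true_and] at hσ ⊢
          constructor
          · exact fun h => h.2
          · rintro rfl; exact ⟨hσ, rfl⟩
        · intro ρ; simp
    _ ≤ ∑ σ ∈ Finset.univ.filter (FirstForced T i), (2 / δ) ^ w * restW (1 - δ) σ := by
        apply Finset.sum_le_sum
        intro σ hσ
        simp only [Finset.mem_filter, Finset.mem_univ, true_and] at hσ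
        rw [fiber_sum hd _ _ hσ.1, mul_comm]
        apply mul_le_mul_of_nonneg_right _ (hnn σ)
        apply pow_le_pow_right₀ _ (hw i)
        rw [le_div_iff₀ hd]; linarith
    _ = _ := by rw [Finset.mul_sum]

lemma sum_reachQ_le {n M w : ℕ} {δ : ℝ} (hd : 0 < δ) (hd1 : δ ≤ 1) (T : Fin M → Term n)
    (hw : ∀ t, termWidth (T t) ≤ w) :
    ∑ i, reachQ n (1 - δ) (FirstHit T i) ≤ (2 / δ) ^ w := by
  have hnn : ∀ ρ : Restriction n, 0 ≤ restW (1 - δ) ρ :=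
    fun ρ => restW_nonneg (by linarith) (by linarith) ρ
  calc _ ≤ ∑ i, (2 / δ) ^ w * ∑ σ ∈ Finset.univ.filter (FirstForced T i), restW (1 - δ) σ :=
        Finset.sum_le_sum (fun i _ => reachQ_le_forced hd hd1 T hw i)
    _ = (2 / δ) ^ w * ∑ i, ∑ σ ∈ Finset.univ.filter (FirstForced T i), restW (1 - δ) σ := by
        rw [Finset.mul_sum]
    _ ≤ (2 / δ) ^ w * 1 := by
        apply mul_le_mul_of_nonneg_left _ (by positivity)
        rw [← Finset.sum_biUnion]
        · refine le_trans ?_ (sum_restW n (1 - δ)).le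
          apply Finset.sum_le_sum_of_subset_of_nonneg (Finset.subset_univ _)
          intro ρ _ _; exact hnn ρ
        · intro i _ j _ hij
          simp only [Function.onFun]
          rw [Finset.disjoint_left]
          intro σ h1 h2
          simp only [Finset.mem_filter, Finset.mem_univ, true_and] at h1 h2
          rcases lt_or_gt_of_ne hij with h | h
          · exact h2.2 i h h1.1
          · exact h1.2 j h h2.1
    _ = _ := mul_one _

lemma error_le {n M : ℕ} (T : Fin M → Term n) (S : Finset (Fin M)) :
    pr n (fun x => ¬ ((∃ t ∈ S, TermSat (T t) x) ↔ DNFeval T x)) ≤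
      ∑ i ∈ Sᶜ, pr n (FirstHit T i) := by
  unfold pr
  rw [← Finset.sum_div]
  apply div_le_div_of_nonneg_right _ (by positivity)
  rw [← Nat.cast_sum]
  norm_cast
  refine le_trans (Finset.card_le_card ?_) Finset.card_biUnion_le
  intro x hx
  simp only [Finset.mem_filter, Finset.mem_univ, true_and, Finset.mem_biUnion,
    Finset.mem_compl] at hx ⊢
  have hD : DNFeval T x := by
    by_contra h
    apply hx
    constructor
    · rintro ⟨t, _, ht⟩; exact ⟨t, ht⟩
    · intro h'; exact absurd h' h
  have hS : ¬ ∃ t ∈ S, TermSat (T t) x := fun h => hx ⟨fun _ => hD, fun _ => h⟩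
  obtain ⟨i, hi, hmin⟩ := WellFounded.has_min (wellFounded_lt (α := Fin M))
    {t | TermSat (T t) x} hD
  exact ⟨i, fun h => hS ⟨i, h, hi⟩, hi, fun j hj hs => hmin j hs hj⟩

theorem dnf_sparsification :
    ∃ K : ℝ, 0 < K ∧
      ∀ (n M w : ℕ) (T : Fin M → Term n) (ε : ℝ),
        1 ≤ w → 0 < ε → ε ≤ 1 →
        (∀ t, termWidth (T t) ≤ w) →
        ∃ S : Finset (Fin M),
          (S.card : ℝ) ≤ (2 + Real.logb 2 (1 / ε) / w) ^ (K * w) ∧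
          pr n (fun x => ¬ ((∃ t ∈ S, TermSat (T t) x) ↔ DNFeval T x)) ≤ ε := by
  refine ⟨8, by norm_num, ?_⟩
  intro n M w T ε hw he he1 hT
  have hwp : (0:ℝ) < w := by exact_mod_cast hw
  have hL : 0 ≤ Real.logb 2 (1 / ε) := by
    apply Real.logb_nonneg (by norm_num)
    rw [le_div_iff₀ he]; linarith
  set L := Real.logb 2 (1 / ε) with hLdef
  obtain ⟨B, hB⟩ : ∃ B, B = 2 + L / w := ⟨_, rfl⟩
  rw [← hB]
  have hB2 : 2 ≤ B := by rw [hB]; have := div_nonneg hL hwp.le; linarith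
  have hBp : 0 < B := by linarith
  have hLB : L ≤ w * B := by
    rw [hB]; field_simp; linarith
  obtain ⟨δ, hδ⟩ : ∃ δ, δ = 1 / B := ⟨_, rfl⟩
  have hd : 0 < δ := by rw [hδ]; positivity
  have hdh : δ ≤ 1 / 2 := by rw [hδ]; exact one_div_le_one_div_of_le (by norm_num) hB2
  have hd1 : δ ≤ 1 := by linarith
  have hsum := sum_reachQ_le hd hd1 T hT
  have hq := fun i => pr_rpow_le_reachQ hd hd1 n (FirstHit T i)
  have hQ1 : (1:ℝ) ≤ (2 / δ) ^ w := one_le_pow₀ (by rw [le_div_iff₀ hd]; linarith)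
  have hQB : (2 / δ) ^ w ≤ (B ^ 2) ^ w := by
    apply pow_le_pow_left₀ (by positivity)
    rw [hδ]; field_simp; nlinarith
  set Q : ℝ := (2 / δ) ^ w with hQdef
  have hQp : 0 < Q := by linarith
  have hpn := fun i => pr_nonneg n (FirstHit T i)
  have hqn : ∀ i, 0 ≤ reachQ n (1 - δ) (FirstHit T i) :=
    fun i => (Real.rpow_nonneg (hpn i) δ).trans (hq i)
  set r : ℝ := ε / Q with hr
  have hrp : 0 < r := by positivity
  have hr1 : r ≤ 1 := by rw [hr, div_le_one hQp]; linarith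
  refine ⟨Finset.univ.filter (fun i => r ^ 2 ≤ pr n (FirstHit T i)), ?_, ?_⟩
  · -- size
    set S := Finset.univ.filter (fun i => r ^ 2 ≤ pr n (FirstHit T i)) with hS
    have h1 : (S.card : ℝ) * (r ^ 2) ^ δ ≤ Q := by
      calc (S.card : ℝ) * (r ^ 2) ^ δ = ∑ i ∈ S, (r ^ 2) ^ δ := by simp
        _ ≤ ∑ i ∈ S, reachQ n (1 - δ) (FirstHit T i) := by
            apply Finset.sum_le_sum
            intro i hi
            refine le_trans ?_ (hq i)
            apply Real.rpow_le_rpow (by positivity) _ hd.le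
            simpa [hS] using hi
        _ ≤ ∑ i, reachQ n (1 - δ) (FirstHit T i) :=
            Finset.sum_le_sum_of_subset_of_nonneg (Finset.subset_univ _)
              (fun i _ _ => hqn i)
        _ ≤ Q := hsum
    have h2 : (1 / ε) ^ δ ≤ 2 ^ w := by
      have : (1 / ε) = (2:ℝ) ^ L := by
        rw [hLdef, Real.rpow_logb (by norm_num) (by norm_num) (by positivity)]
      rw [this, ← Real.rpow_mul (by norm_num), ← Real.rpow_natCast]
      apply Real.rpow_le_rpow_of_exponent_le (by norm_num)
      rw [hδ, mul_one_div, div_le_iff₀ hBp]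
      exact hLB
    have h3 : (1 / r) ^ δ ≤ 2 ^ w * Q := by
      have : 1 / r = (1 / ε) * Q := by rw [hr]; field_simp
      rw [this, Real.mul_rpow (by positivity) hQp.le]
      apply mul_le_mul h2 _ (by positivity) (by positivity)
      exact Real.rpow_le_self_of_one_le hQ1 hd1
    have h4 : (1 / r) ^ δ * r ^ δ = 1 := by
      rw [← Real.mul_rpow (by positivity) hrp.le]
      rw [one_div_mul_cancel hrp.ne', Real.one_rpow]
    have h5 : (r ^ 2) ^ δ = (r ^ δ) ^ 2 := by
      rw [pow_two, Real.mul_rpow hrp.le hrp.le, pow_two]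
    have h6 : (S.card : ℝ) ≤ Q * (2 ^ w * Q) ^ 2 := by
      calc (S.card : ℝ) = (S.card * (r ^ 2) ^ δ) * ((1 / r) ^ δ) ^ 2 := by
            rw [h5, mul_assoc, ← mul_pow, mul_comm (r ^ δ), h4]; simp
        _ ≤ Q * (2 ^ w * Q) ^ 2 := by
            apply mul_le_mul h1 _ (by positivity) hQp.le
            exact pow_le_pow_left₀ (by positivity) h3 2
    have h7 : (2:ℝ) ^ w ≤ B ^ w := pow_le_pow_left₀ (by norm_num) hB2 w
    calc (S.card : ℝ) ≤ Q * (2 ^ w * Q) ^ 2 := h6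
      _ ≤ (B ^ 2) ^ w * (B ^ w * (B ^ 2) ^ w) ^ 2 := by gcongr
      _ = B ^ (8 * w) := by
          rw [← pow_mul, ← pow_add, ← pow_mul, ← pow_add]; congr 1; ring
      _ = B ^ ((8:ℝ) * w) := by
          rw [← Real.rpow_natCast]; push_cast; rfl
  · refine (error_le T _).trans ?_
    have hbound : ∀ i ∈ (Finset.univ.filter (fun i => r ^ 2 ≤ pr n (FirstHit T i)))ᶜ,
        pr n (FirstHit T i) ≤ r * reachQ n (1 - δ) (FirstHit T i) := by
      intro i hi
      simp only [Finset.mem_compl, Finset.mem_filter, Finset.mem_univ, true_and, not_le] at hi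
      have e : pr n (FirstHit T i) = pr n (FirstHit T i) ^ (1 - δ) * pr n (FirstHit T i) ^ δ := by
        rw [← Real.rpow_add' (hpn i) (by norm_num)]
        simp
      rw [e]
      apply mul_le_mul _ (hq i) (Real.rpow_nonneg (hpn i) _) hrp.le
      calc pr n (FirstHit T i) ^ (1 - δ) ≤ (r ^ 2) ^ (1 - δ) :=
            Real.rpow_le_rpow (hpn i) hi.le (by linarith)
        _ ≤ (r ^ 2) ^ ((1:ℝ) / 2) :=
            Real.rpow_le_rpow_of_exponent_ge (by positivity)
              (pow_le_one₀ hrp.le hr1) (by linarith)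
        _ = r := by rw [← Real.sqrt_eq_rpow, Real.sqrt_sq hrp.le]
    calc _ ≤ ∑ i ∈ (Finset.univ.filter (fun i => r ^ 2 ≤ pr n (FirstHit T i)))ᶜ,
            r * reachQ n (1 - δ) (FirstHit T i) := Finset.sum_le_sum hbound
      _ ≤ ∑ i, r * reachQ n (1 - δ) (FirstHit T i) :=
          Finset.sum_le_sum_of_subset_of_nonneg (Finset.subset_univ _)
            (fun i _ _ => mul_nonneg hrp.le (hqn i))
      _ = r * ∑ i, reachQ n (1 - δ) (FirstHit T i) := by rw [Finset.mul_sum]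
      _ ≤ r * Q := mul_le_mul_of_nonneg_left hsum hrp.le
      _ = ε := by rw [hr]; field_simp
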